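/- Let 𝓑 be a real symmetric positive definite 2d×2d matrix and C a real 2d×2d matrix admitting the decomposition C = V Λ Vᵀ𝓑 + V⊥ Λ⊥ V⊥ᵀ𝓑, where V ∈ ℝ^{2d×k} and V⊥ ∈ ℝ^{2d×(2d−k)} satisfy Vᵀ𝓑V = I_k, V⊥ᵀ𝓑V⊥ = I_{2d−k}, V⊥ᵀ𝓑V = 0, Λ = diag(μ₁,…,μ_k) and Λ⊥ = diag(μ_{k+1},…,μ_{2d}) with |μ₁| ≥ … ≥ |μ_k| > |μ_{k+1}| ≥ … ≥ |μ_{2d}|. Let Ȳ ∈ ℝ^{2d×k} satisfy Ȳᵀ𝓑Ȳ = I_k with Vᵀ𝓑Ȳ invertible, let Y = ȲG for some invertible G ∈ ℝ^{k×k} with ‖G^{−1}‖ ≤ 1, let Ξ ∈ ℝ^{2d×k} and R ∈ ℝ^{k×k} invertible, and set Y' = (CY + Ξ)R^{−1}, assuming Vᵀ𝓑Y' is invertible. If ‖Ξ‖_𝓑 ≤ ((|μ_k| − |μ_{k+1}|)/4) · min{ sinθ(Ȳ, V), cosθ(Ȳ, V) }, then tanθ(Y', V) ≤ ((|μ_k|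 + 3|μ_{k+1}|)/(3|μ_k| + |μ_{k+1}|)) · tanθ(Ȳ, V), where tanθ(Y', V) = ‖V⊥ᵀ𝓑Y'(Vᵀ𝓑Y')^{−1}‖. -/

import Mathlib

open Matrix

/-- The spectral norm (largest singular value) of a real rectangular matrix,
realized as the operator norm of the induced map between Euclidean spaces. -/
noncomputable def specNorm {m n : Type*} [Fintype m] [Fintype n] [DecidableEq n]
    (M : Matrix m n ℝ) : ℝ :=
  ‖LinearMap.toContinuousLinearMap (Matrix.toEuclideanLin M)‖

/-- The smallest singular value of a square real matrix, realized as the infimum of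
`‖Mx‖` over unit vectors `x` of the Euclidean space. -/
noncomputable def sminNorm {k : ℕ} (M : Matrix (Fin k) (Fin k) ℝ) : ℝ :=
  sInf {r : ℝ | ∃ x : EuclideanSpace ℝ (Fin k), ‖x‖ = 1 ∧ r = ‖Matrix.toEuclideanLin M x‖}

/-!
Write `A = Vᵀ𝓑Ȳ` and `B = V⊥ᵀ𝓑Ȳ`, so that `AᵀA + BᵀB = 1`, and let `a = |μ_k|`, `b = |μ_{k+1}|`.
The bound `tan θ ≤ t` means `‖B x‖ ≤ t ‖A x‖` for all `x`, so right multiplication by an invertible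
matrix does not affect it. One step maps `(A u, B u)` to `(Λ A u + e, Λ⊥ B u + f)`, which shrinks
the ratio `t` to at most `(b + g) t / (a - g)` as soon as `‖e‖ ≤ g ‖A u‖` and `‖f‖ ≤ g t ‖A u‖`;
take `g = (a - b) / 4`. The assumption on the noise gives both, because `cos θ ‖u‖ ≤ ‖A u‖` and,
thanks to `AᵀA + BᵀB = 1`, also `sin θ ‖u‖ ≤ t ‖A u‖`.
-/

section SpectralNorm

variable {m n : Type*} [Fintype m] [Fintype n] [DecidableEq n]

lemma specNorm_nonneg (M : Matrix m n ℝ) : 0 ≤ specNorm M :=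
  norm_nonneg _

lemma norm_toEuclideanLin_le (M : Matrix m n ℝ) (x : EuclideanSpace ℝ n) :
    ‖toEuclideanLin M x‖ ≤ specNorm M * ‖x‖ :=
  (LinearMap.toContinuousLinearMap (toEuclideanLin M)).le_opNorm x

lemma norm_toEuclideanLin_le_mul_of_le {M : Matrix m n ℝ} {x : EuclideanSpace ℝ n}
    {g c y z : ℝ} (hg : 0 ≤ g) (hM : specNorm M ≤ g * c) (hx : ‖x‖ ≤ y) (hz : c * y ≤ z) :
    ‖toEuclideanLin M x‖ ≤ g * z :=
  calc ‖toEuclideanLin M x‖ ≤ specNorm M * ‖x‖ := norm_toEuclideanLin_le M x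
    _ ≤ g * c * y := mul_le_mul hM hx (norm_nonneg x) ((specNorm_nonneg M).trans hM)
    _ = g * (c * y) := mul_assoc g c y
    _ ≤ g * z := by gcongr

lemma specNorm_le_of_forall {M : Matrix m n ℝ} {c : ℝ} (hc : 0 ≤ c)
    (h : ∀ x, ‖toEuclideanLin M x‖ ≤ c * ‖x‖) : specNorm M ≤ c :=
  (LinearMap.toContinuousLinearMap (toEuclideanLin M)).opNorm_le_bound hc h

lemma sminNorm_mul_norm_le {k : ℕ} (M : Matrix (Fin k) (Fin k) ℝ)
    (x : EuclideanSpace ℝ (Fin k)) : sminNorm M * ‖x‖ ≤ ‖toEuclideanLin M x‖ := by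
  rcases eq_or_ne x 0 with rfl | hx
  · simp
  have h_bdd : BddBelow {r : ℝ | ∃ y : EuclideanSpace ℝ (Fin k), ‖y‖ = 1 ∧
      r = ‖toEuclideanLin M y‖} := ⟨0, by rintro _ ⟨y, -, rfl⟩; exact norm_nonneg _⟩
  have h_unit : sminNorm M ≤ ‖toEuclideanLin M (‖x‖⁻¹ • x)‖ :=
    csInf_le h_bdd ⟨_, norm_smul_inv_norm (𝕜 := ℝ) hx, rfl⟩
  rwa [map_smul, norm_smul, norm_inv, norm_norm, inv_mul_eq_div,
    le_div_iff₀ (norm_pos_iff.2 hx)] at h_unit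

lemma toEuclideanLin_mul_apply {l : Type*} [DecidableEq m] (M : Matrix l m ℝ) (N : Matrix m n ℝ)
    (x : EuclideanSpace ℝ n) :
    toEuclideanLin (M * N) x = toEuclideanLin M (toEuclideanLin N x) := by
  rw [toLpLin_mul_same, LinearMap.comp_apply]

lemma specNorm_mul_inv_le_iff {M : Matrix m n ℝ} {A : Matrix n n ℝ} (hA : IsUnit A.det)
    {t : ℝ} (ht : 0 ≤ t) :
    specNorm (M * A⁻¹) ≤ t ↔ ∀ x, ‖toEuclideanLin M x‖ ≤ t * ‖toEuclideanLin A x‖ := by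
  refine ⟨fun h x ↦ ?_, fun h ↦ specNorm_le_of_forall ht fun y ↦ ?_⟩
  · calc ‖toEuclideanLin M x‖
        = ‖toEuclideanLin (M * A⁻¹) (toEuclideanLin A x)‖ := by
          rw [← toEuclideanLin_mul_apply, nonsing_inv_mul_cancel_right _ _ hA]
      _ ≤ specNorm (M * A⁻¹) * ‖toEuclideanLin A x‖ := norm_toEuclideanLin_le _ _
      _ ≤ t * ‖toEuclideanLin A x‖ := by gcongr
  · simpa only [← toEuclideanLin_mul_apply, mul_nonsing_inv _ hA, toLpLin_one,
      LinearMap.id_apply] using h (toEuclideanLin A⁻¹ y)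

lemma norm_le_norm_toEuclideanLin_of_specNorm_inv_le_one {A : Matrix n n ℝ}
    (hA : IsUnit A.det) (h : specNorm A⁻¹ ≤ 1) (x : EuclideanSpace ℝ n) :
    ‖x‖ ≤ ‖toEuclideanLin A x‖ := by
  rw [← one_mul A⁻¹, specNorm_mul_inv_le_iff hA zero_le_one] at h
  simpa using h x

open scoped Matrix.Norms.L2Operator in
lemma specNorm_diagonal_le {v : n → ℝ} {b : ℝ} (hb : 0 ≤ b) (h : ∀ i, |v i| ≤ b) :
    specNorm (diagonal v) ≤ b :=
  (l2_opNorm_diagonal v).trans_le ((pi_norm_le_iff_of_nonneg hb).2 h)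

lemma mul_norm_le_norm_toEuclideanLin_diagonal {v : n → ℝ} {a : ℝ} (ha : 0 ≤ a)
    (h : ∀ i, a ≤ |v i|) (x : EuclideanSpace ℝ n) :
    a * ‖x‖ ≤ ‖toEuclideanLin (diagonal v) x‖ := by
  refine le_of_sq_le_sq ?_ (norm_nonneg _)
  simp only [mul_pow, EuclideanSpace.norm_sq_eq, Finset.mul_sum, ofLp_toLpLin, toLin'_apply,
    mulVec_diagonal, norm_mul, Real.norm_eq_abs]
  gcongr with i
  exact h i

end SpectralNorm

section Gram

variable {p q r n : Type*} [Fintype p] [Fintype q] [Fintype r] [Fintype n]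

lemma gram_add_gram_mul_right {o R : Type*} [CommSemiring R]
    {M : Matrix p n R} {N : Matrix q n R} {K : Matrix r n R}
    (h : Mᵀ * M + Nᵀ * N = Kᵀ * K) (X : Matrix n o R) :
    (M * X)ᵀ * (M * X) + (N * X)ᵀ * (N * X) = (K * X)ᵀ * (K * X) := by
  have h' : Xᵀ * (Mᵀ * M + Nᵀ * N) * X = Xᵀ * (Kᵀ * K) * X := by rw [h]
  simpa only [transpose_mul, Matrix.mul_add, Matrix.add_mul, Matrix.mul_assoc] using h'

variable [DecidableEq n]

lemma norm_toEuclideanLin_sq (M : Matrix p n ℝ) (x : EuclideanSpace ℝ n) :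
    ‖toEuclideanLin M x‖ ^ 2 = inner ℝ x (toEuclideanLin (Mᵀ * M) x) := by
  classical
  rw [toEuclideanLin_mul_apply, ← conjTranspose_eq_transpose_of_trivial,
    toEuclideanLin_conjTranspose_eq_adjoint, LinearMap.adjoint_inner_right,
    real_inner_self_eq_norm_sq]

lemma norm_sq_add_norm_sq_of_gram {M : Matrix p n ℝ} {N : Matrix q n ℝ} {K : Matrix r n ℝ}
    (h : Mᵀ * M + Nᵀ * N = Kᵀ * K) (x : EuclideanSpace ℝ n) :
    ‖toEuclideanLin M x‖ ^ 2 + ‖toEuclideanLin N x‖ ^ 2 = ‖toEuclideanLin K x‖ ^ 2 := by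
  simp only [norm_toEuclideanLin_sq, ← inner_add_right, ← LinearMap.add_apply, ← map_add, h]

lemma specNorm_le_of_gram {M : Matrix p n ℝ} {N : Matrix q n ℝ} {K : Matrix r n ℝ}
    (h : Mᵀ * M + Nᵀ * N = Kᵀ * K) : specNorm M ≤ specNorm K := by
  refine specNorm_le_of_forall (specNorm_nonneg K) fun x ↦ ?_
  have h_le : ‖toEuclideanLin M x‖ ≤ ‖toEuclideanLin K x‖ := by
    refine le_of_sq_le_sq ?_ (norm_nonneg _)
    linarith [norm_sq_add_norm_sq_of_gram h x, sq_nonneg ‖toEuclideanLin N x‖]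
  exact h_le.trans (norm_toEuclideanLin_le K x)

/- If `‖A x‖ / ‖x‖ ≤ ‖A u‖ / ‖u‖`, bound `B x` by `A x`; otherwise `‖B x‖ / ‖x‖ ≤ ‖B u‖ / ‖u‖`,
and `B u` is bounded by `A u`. -/
lemma norm_mul_norm_le_of_gram_eq_one {A : Matrix p n ℝ} {B : Matrix q n ℝ}
    (hAB : Aᵀ * A + Bᵀ * B = 1) {t : ℝ} (ht : 0 ≤ t)
    (hBA : ∀ x, ‖toEuclideanLin B x‖ ≤ t * ‖toEuclideanLin A x‖) (x u : EuclideanSpace ℝ n) :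
    ‖toEuclideanLin B x‖ * ‖u‖ ≤ t * ‖toEuclideanLin A u‖ * ‖x‖ := by
  have h_pyth (y : EuclideanSpace ℝ n) :
      ‖toEuclideanLin A y‖ ^ 2 + ‖toEuclideanLin B y‖ ^ 2 = ‖y‖ ^ 2 := by
    simpa using norm_sq_add_norm_sq_of_gram (K := (1 : Matrix n n ℝ)) (by simpa using hAB) y
  rcases le_total (‖toEuclideanLin A x‖ * ‖u‖) (‖toEuclideanLin A u‖ * ‖x‖) with h | h
  · calc ‖toEuclideanLin B x‖ * ‖u‖
        ≤ t * ‖toEuclideanLin A x‖ * ‖u‖ := by gcongr; exact hBA x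
      _ = t * (‖toEuclideanLin A x‖ * ‖u‖) := by ring
      _ ≤ t * (‖toEuclideanLin A u‖ * ‖x‖) := by gcongr
      _ = t * ‖toEuclideanLin A u‖ * ‖x‖ := by ring
  · have h_sq : (‖toEuclideanLin B x‖ * ‖u‖) ^ 2 ≤ (‖toEuclideanLin B u‖ * ‖x‖) ^ 2 := by
      have h_sq_A := pow_le_pow_left₀ (by positivity) h 2
      simp only [mul_pow, ← h_pyth] at h_sq_A ⊢
      linarith
    calc ‖toEuclideanLin B x‖ * ‖u‖
        ≤ ‖toEuclideanLin B u‖ * ‖x‖ := le_of_sq_le_sq h_sq (by positivity)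
      _ ≤ t * ‖toEuclideanLin A u‖ * ‖x‖ := by gcongr; exact hBA u

lemma specNorm_mul_norm_le_of_gram_eq_one {A : Matrix p n ℝ} {B : Matrix q n ℝ}
    (hAB : Aᵀ * A + Bᵀ * B = 1) {t : ℝ} (ht : 0 ≤ t)
    (hBA : ∀ x, ‖toEuclideanLin B x‖ ≤ t * ‖toEuclideanLin A x‖) (u : EuclideanSpace ℝ n) :
    specNorm B * ‖u‖ ≤ t * ‖toEuclideanLin A u‖ := by
  rcases eq_or_ne u 0 with rfl | hu
  · simp
  have hu_pos : 0 < ‖u‖ := norm_pos_iff.2 hu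
  rw [← le_div_iff₀ hu_pos]
  refine specNorm_le_of_forall (by positivity) fun x ↦ ?_
  rw [div_mul_eq_mul_div, le_div_iff₀ hu_pos]
  exact norm_mul_norm_le_of_gram_eq_one hAB ht hBA x u

end Gram

section Splitting

variable {R ι κ n : Type*} [CommRing R] [Fintype n]

lemma transpose_mul_mul_eq_zero_symm {𝓑 : Matrix n n R} (h𝓑 : 𝓑.IsSymm)
    {V : Matrix n ι R} {W : Matrix n κ R} (h : Wᵀ * 𝓑 * V = 0) : Vᵀ * 𝓑 * W = 0 := by
  simpa [transpose_mul, h𝓑.eq, Matrix.mul_assoc] using congrArg transpose h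

variable [Fintype ι] [Fintype κ]

lemma mul_step_eq_of_mul_eq {P : Matrix ι n R} {C : Matrix n n R} {Λ : Matrix ι ι R}
    (h : P * C = Λ * P) (Y Ξ : Matrix n κ R) (G T : Matrix κ κ R) :
    P * ((C * (Y * G) + Ξ) * T) = (Λ * (P * Y) * G + P * Ξ) * T := by
  simp only [Matrix.mul_add, ← Matrix.mul_assoc, h]

variable [DecidableEq ι] [DecidableEq κ]

lemma mul_add_mul_eq_one_of_biorthogonal [DecidableEq n]
    (hcard : Fintype.card ι + Fintype.card κ = Fintype.card n)
    {P : Matrix ι n R} {Q : Matrix κ n R} {V : Matrix n ι R} {W : Matrix n κ R}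
    (hPV : P * V = 1) (hPW : P * W = 0) (hQV : Q * V = 0) (hQW : Q * W = 1) :
    V * P + W * Q = 1 := by
  have h_rows : fromRows P Q * fromCols V W = 1 := by
    rw [fromRows_mul_fromCols, hPV, hPW, hQV, hQW, fromBlocks_one]
  rwa [mul_eq_one_comm_of_card_eq _ _ _ (by simp [hcard]), fromCols_mul_fromRows] at h_rows

lemma gram_add_gram_of_orthonormal
    (hcard : Fintype.card ι + Fintype.card κ = Fintype.card n)
    {𝓑 : Matrix n n R} (h𝓑 : 𝓑.IsSymm) {V : Matrix n ι R} {W : Matrix n κ R}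
    (hV : Vᵀ * 𝓑 * V = 1) (hW : Wᵀ * 𝓑 * W = 1) (hWV : Wᵀ * 𝓑 * V = 0) :
    (Vᵀ * 𝓑)ᵀ * (Vᵀ * 𝓑) + (Wᵀ * 𝓑)ᵀ * (Wᵀ * 𝓑) = 𝓑 := by
  classical
  have h_one := mul_add_mul_eq_one_of_biorthogonal hcard hV
    (transpose_mul_mul_eq_zero_symm h𝓑 hWV) hWV hW
  calc (Vᵀ * 𝓑)ᵀ * (Vᵀ * 𝓑) + (Wᵀ * 𝓑)ᵀ * (Wᵀ * 𝓑)
      = 𝓑 * (V * (Vᵀ * 𝓑) + W * (Wᵀ * 𝓑)) := by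
        simp only [transpose_mul, transpose_transpose, h𝓑.eq, Matrix.mul_add, Matrix.mul_assoc]
    _ = 𝓑 := by rw [h_one, Matrix.mul_one]

end Splitting

section Contraction

lemma div_quarter_gap_eq (a b : ℝ) :
    (b + (a - b) / 4) / (a - (a - b) / 4) = (a + 3 * b) / (3 * a + b) := by
  rw [← div_div_div_cancel_right₀ four_ne_zero (a + 3 * b)]
  ring_nf

lemma norm_add_le_div_mul_norm_add {E F : Type*} [SeminormedAddCommGroup E]
    [SeminormedAddCommGroup F] {a b g t s : ℝ} (hbg : 0 ≤ b + g) (hga : g < a) (ht : 0 ≤ t)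
    {p e : E} {q f : F} (hp : a * s ≤ ‖p‖) (he : ‖e‖ ≤ g * s)
    (hq : ‖q‖ ≤ b * (t * s)) (hf : ‖f‖ ≤ g * (t * s)) :
    ‖q + f‖ ≤ (b + g) / (a - g) * t * ‖p + e‖ := by
  have h_den : 0 < a - g := sub_pos.2 hga
  have h_lower : (a - g) * s ≤ ‖p + e‖ := by linarith [norm_sub_le_norm_add p e]
  calc ‖q + f‖ ≤ (b + g) * (t * s) := by linarith [norm_add_le q f]
    _ = (b + g) / (a - g) * t * ((a - g) * s) := by field_simp
    _ ≤ (b + g) / (a - g) * t * ‖p + e‖ := by gcongr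

variable {k : ℕ} {κ : Type*} [Fintype κ] [DecidableEq κ]

theorem specNorm_block_step_mul_inv_le
    {A Λ E G T : Matrix (Fin k) (Fin k) ℝ} {B F : Matrix κ (Fin k) ℝ} {Λperp : Matrix κ κ ℝ}
    {a b g : ℝ} (hg : 0 ≤ g) (hga : g < a) (hΛ : ∀ x, a * ‖x‖ ≤ ‖toEuclideanLin Λ x‖)
    (hΛperp : specNorm Λperp ≤ b)
    (hAB : Aᵀ * A + Bᵀ * B = 1) (hA : IsUnit A.det)
    (hG : IsUnit G.det) (hGinv : specNorm G⁻¹ ≤ 1)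
    (hE : specNorm E ≤ g * sminNorm A)
    (hF : specNorm F ≤ g * specNorm B)
    (hstep : IsUnit ((Λ * A * G + E) * T).det) :
    specNorm ((Λperp * B * G + F) * T * ((Λ * A * G + E) * T)⁻¹) ≤
      (b + g) / (a - g) * specNorm (B * A⁻¹) := by
  have hb : 0 ≤ b := (specNorm_nonneg Λperp).trans hΛperp
  have ht : 0 ≤ specNorm (B * A⁻¹) := specNorm_nonneg _
  have hρ : 0 ≤ (b + g) / (a - g) := div_nonneg (add_nonneg hb hg) (sub_nonneg.2 hga.le)
  have hBA := (specNorm_mul_inv_le_iff hA ht).1 le_rfl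
  rw [specNorm_mul_inv_le_iff hstep (mul_nonneg hρ ht)]
  intro x
  simp only [toEuclideanLin_mul_apply, map_add, LinearMap.add_apply]
  set w := toEuclideanLin T x
  set u := toEuclideanLin G w
  have hwu : ‖w‖ ≤ ‖u‖ := norm_le_norm_toEuclideanLin_of_specNorm_inv_le_one hG hGinv w
  exact norm_add_le_div_mul_norm_add (add_nonneg hb hg) hga ht (hΛ _)
    (norm_toEuclideanLin_le_mul_of_le hg hE hwu (sminNorm_mul_norm_le A u))
    ((norm_toEuclideanLin_le Λperp _).trans
      (mul_le_mul hΛperp (hBA u) (norm_nonneg _) hb))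
    (norm_toEuclideanLin_le_mul_of_le hg hF hwu
      (specNorm_mul_norm_le_of_gram_eq_one hAB ht hBA u))

/- `S` may be any factor of `𝓑`, for instance a Cholesky factor: `specNorm (S * M)` depends on `S`
only through `Sᵀ * S`. In the power iteration, `T = R⁻¹`. -/
theorem topk_one_step_contraction_general {n r : Type*} [Fintype n] [Fintype r]
    (hcard : k + Fintype.card κ = Fintype.card n)
    {𝓑 C : Matrix n n ℝ} {S : Matrix r n ℝ} (hS : Sᵀ * S = 𝓑)
    {V : Matrix n (Fin k) ℝ} {Vperp : Matrix n κ ℝ}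
    (hV : Vᵀ * 𝓑 * V = 1) (hVperp : Vperpᵀ * 𝓑 * Vperp = 1) (hVV : Vperpᵀ * 𝓑 * V = 0)
    {Λ : Matrix (Fin k) (Fin k) ℝ} {Λperp : Matrix κ κ ℝ} {a b g : ℝ}
    (hg : 0 ≤ g) (hga : g < a) (hΛ : ∀ x, a * ‖x‖ ≤ ‖toEuclideanLin Λ x‖)
    (hΛperp : specNorm Λperp ≤ b)
    (hC : C = V * Λ * Vᵀ * 𝓑 + Vperp * Λperp * Vperpᵀ * 𝓑)
    {Ybar Ξ : Matrix n (Fin k) ℝ}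
    (hYbar : Ybarᵀ * 𝓑 * Ybar = 1) (hYbarV : IsUnit (Vᵀ * 𝓑 * Ybar).det)
    {G T : Matrix (Fin k) (Fin k) ℝ} (hG : IsUnit G.det) (hGinv : specNorm G⁻¹ ≤ 1)
    (hstep : IsUnit (Vᵀ * 𝓑 * ((C * (Ybar * G) + Ξ) * T)).det)
    (hΞ : specNorm (S * Ξ) ≤
      g * min (specNorm (Vperpᵀ * 𝓑 * Ybar)) (sminNorm (Vᵀ * 𝓑 * Ybar))) :
    specNorm (Vperpᵀ * 𝓑 * ((C * (Ybar * G) + Ξ) * T) *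
        (Vᵀ * 𝓑 * ((C * (Ybar * G) + Ξ) * T))⁻¹) ≤
      (b + g) / (a - g) *
        specNorm (Vperpᵀ * 𝓑 * Ybar * (Vᵀ * 𝓑 * Ybar)⁻¹) := by
  have h𝓑 : 𝓑.IsSymm := by
    rw [IsSymm, ← hS, transpose_mul, transpose_transpose]
  have hVV' : Vᵀ * 𝓑 * Vperp = 0 := transpose_mul_mul_eq_zero_symm h𝓑 hVV
  have h_gram : (Vᵀ * 𝓑)ᵀ * (Vᵀ * 𝓑) + (Vperpᵀ * 𝓑)ᵀ * (Vperpᵀ * 𝓑) = Sᵀ * S := by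
    rw [gram_add_gram_of_orthonormal (by simpa using hcard) h𝓑 hV hVperp hVV, hS]
  have hAB : (Vᵀ * 𝓑 * Ybar)ᵀ * (Vᵀ * 𝓑 * Ybar) +
      (Vperpᵀ * 𝓑 * Ybar)ᵀ * (Vperpᵀ * 𝓑 * Ybar) = 1 := by
    rw [gram_add_gram_mul_right h_gram, ← hYbar, ← hS, transpose_mul]
    simp only [Matrix.mul_assoc]
  have hCV : Vᵀ * 𝓑 * C = Λ * (Vᵀ * 𝓑) := by
    simp only [hC, Matrix.mul_add, ← Matrix.mul_assoc, hV, hVV', Matrix.one_mul, Matrix.zero_mul,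
      add_zero]
  have hCVperp : Vperpᵀ * 𝓑 * C = Λperp * (Vperpᵀ * 𝓑) := by
    simp only [hC, Matrix.mul_add, ← Matrix.mul_assoc, hVperp, hVV, Matrix.one_mul,
      Matrix.zero_mul, zero_add]
  rw [mul_step_eq_of_mul_eq hCV] at hstep
  rw [mul_step_eq_of_mul_eq hCV, mul_step_eq_of_mul_eq hCVperp]
  have h_noise := gram_add_gram_mul_right h_gram Ξ
  refine specNorm_block_step_mul_inv_le hg hga hΛ hΛperp hAB hYbarV hG hGinv ?_ ?_ hstep
  · exact (specNorm_le_of_gram h_noise).trans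
      (hΞ.trans (mul_le_mul_of_nonneg_left (min_le_right _ _) hg))
  · exact (specNorm_le_of_gram ((add_comm _ _).trans h_noise)).trans
      (hΞ.trans (mul_le_mul_of_nonneg_left (min_le_left _ _) hg))

end Contraction

/-- **One-step contraction for the top-`k` noisy accelerated power iteration
(proof of Theorem 2).**  Here `Ssqrt = 𝓑^{1/2}` is the symmetric positive definite
square root of `𝓑`, so `‖M‖_𝓑 = specNorm (Ssqrt * M)`; `cosθ(Ȳ,V) = σ_k(Vᵀ𝓑Ȳ)`,
`sinθ(Ȳ,V) = ‖V⊥ᵀ𝓑Ȳ‖`, and `tanθ(M,V) = ‖V⊥ᵀ𝓑M(Vᵀ𝓑M)⁻¹‖`. -/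
theorem topk_one_step_contraction
    {d k : ℕ} (hk0 : 0 < k) (hk2d : k < 2 * d)
    (𝓑 C Ssqrt : Matrix (Fin (2 * d)) (Fin (2 * d)) ℝ)
    (h𝓑 : 𝓑.PosDef) (h𝓑sym : 𝓑.IsSymm)
    (hSsqrt : Ssqrt.PosDef) (hSsqrtSym : Ssqrt.IsSymm) (hSsq : Ssqrt * Ssqrt = 𝓑)
    (V : Matrix (Fin (2 * d)) (Fin k) ℝ)
    (Vperp : Matrix (Fin (2 * d)) (Fin (2 * d - k)) ℝ)
    (hV : Vᵀ * 𝓑 * V = 1) (hVperp : Vperpᵀ * 𝓑 * Vperp = 1)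
    (hVV : Vperpᵀ * 𝓑 * V = 0)
    (μ : Fin k → ℝ) (ν : Fin (2 * d - k) → ℝ)
    (hμmono : ∀ i j : Fin k, i ≤ j → |μ j| ≤ |μ i|)
    (hνmono : ∀ i j : Fin (2 * d - k), i ≤ j → |ν j| ≤ |ν i|)
    (hgap : |ν ⟨0, by omega⟩| < |μ ⟨k - 1, by omega⟩|)
    (hC : C = V * Matrix.diagonal μ * Vᵀ * 𝓑 + Vperp * Matrix.diagonal ν * Vperpᵀ * 𝓑)
    (Ybar : Matrix (Fin (2 * d)) (Fin k) ℝ)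
    (hYbar : Ybarᵀ * 𝓑 * Ybar = 1) (hYbarV : IsUnit (Vᵀ * 𝓑 * Ybar).det)
    (G : Matrix (Fin k) (Fin k) ℝ) (hG : IsUnit G.det) (hGinv : specNorm G⁻¹ ≤ 1)
    (Y : Matrix (Fin (2 * d)) (Fin k) ℝ) (hY : Y = Ybar * G)
    (Ξ : Matrix (Fin (2 * d)) (Fin k) ℝ)
    (R : Matrix (Fin k) (Fin k) ℝ) (hR : IsUnit R.det)
    (Y' : Matrix (Fin (2 * d)) (Fin k) ℝ) (hY' : Y' = (C * Y + Ξ) * R⁻¹)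
    (hY'V : IsUnit (Vᵀ * 𝓑 * Y').det)
    (hΞ : specNorm (Ssqrt * Ξ) ≤
      (|μ ⟨k - 1, by omega⟩| - |ν ⟨0, by omega⟩|) / 4 *
        min (specNorm (Vperpᵀ * 𝓑 * Ybar)) (sminNorm (Vᵀ * 𝓑 * Ybar))) :
    specNorm (Vperpᵀ * 𝓑 * Y' * (Vᵀ * 𝓑 * Y')⁻¹) ≤
      (|μ ⟨k - 1, by omega⟩| + 3 * |ν ⟨0, by omega⟩|) /
          (3 * |μ ⟨k - 1, by omega⟩| + |ν ⟨0, by omega⟩|) *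
        specNorm (Vperpᵀ * 𝓑 * Ybar * (Vᵀ * 𝓑 * Ybar)⁻¹) := by
  have hμ (i : Fin k) : |μ ⟨k - 1, by omega⟩| ≤ |μ i| := hμmono _ _ (Fin.le_def.2 (by grind))
  have hν (i : Fin (2 * d - k)) : |ν i| ≤ |ν ⟨0, by omega⟩| := hνmono _ _ (Fin.le_def.2 (by simp))
  have hν_nonneg := abs_nonneg (ν ⟨0, by omega⟩)
  subst hY hY'
  rw [← div_quarter_gap_eq]
  exact topk_one_step_contraction_general (by simp; omega)
    (by rw [hSsqrtSym.eq, hSsq]) hV hVperp hVV (by linarith) (by linarith)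
    (mul_norm_le_norm_toEuclideanLin_diagonal (abs_nonneg _) hμ)
    (specNorm_diagonal_le hν_nonneg hν) hC hYbar hYbarV hG hGinv hY'V hΞ
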